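/- Let C > 0 and let y : ℤ → ℝ be a sequence with y_k ≠ 0 for all k ∈ ℤ and |y_k − k| ≤ C·log(2 + |k|) for all k ∈ ℤ, and let ξ(z) = e^{iπz}·(1 − z/y_0)·∏_{k=1}^∞ [(1 − z/y_k)(1 − z/y_{−k})] be the associated entire function. Then for every z ∈ ℂ not belonging to {y_k : k ∈ ℤ}, the set {k ∈ ℤ : |y_k| < A} is finite for each A > 0 and ξ′(z)/ξ(z) = iπ + lim_{A→∞} Σ_{k : |y_k| < A} 1/(z − y_k). -/

import Mathlib

/-!
Only the weaker bound `|y_k - k| ≤ D √(2 + |k|)` with `D = 2C` is used.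

It makes the symmetric pairs `1/(w - y_k) + 1/(w - y_{-k})` of size `O(k^{-3/2})`
(`summable_norm_pair`). Taken at `w = 0`, this and the summability of `1/(y_k y_{-k})` show that
the product defining `ξ` converges locally uniformly and vanishes only at the points, so it can be
differentiated logarithmically factor by factor (`logDeriv_xiFun`); taken at `w = z`, it gives the
convergence of the resulting series, which is summed over `|k| ≤ N`.

To pass from the cut `|k| ≤ ⌊A⌋` to the cut `|y_k| < A`, note that an index counted by only one of
them satisfies `|k| = A + O(√A)`. There are `O(√A)` such indices, each contributing `O(1/A)`, so the
difference tends to zero (`tendsto_sum_sub_sum`).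
-/

open Filter Topology

/-- The entire function `ξ(z) = e^{iπz} (1 − z/y₀) ∏_{k≥1} (1 − z/y_k)(1 − z/y_{−k})` associated
to a sequence `y : ℤ → ℝ`. -/
noncomputable def xiFun (y : ℤ → ℝ) : ℂ → ℂ := fun z =>
  Complex.exp (Real.pi * Complex.I * z) * (1 - z / (y 0 : ℂ)) *
    ∏' k : ℕ, ((1 - z / (y ((k : ℤ) + 1) : ℂ)) * (1 - z / (y (-((k : ℤ) + 1)) : ℂ)))

/-! ### Elementary bounds on the points -/

lemma abs_sub_le_sqrt {C : ℝ} (hC : 0 < C) {y : ℤ → ℝ}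
    (hb : ∀ k : ℤ, |y k - k| ≤ C * Real.log (2 + |(k : ℝ)|)) (k : ℤ) :
    |y k - k| ≤ 2 * C * √(2 + |(k : ℝ)|) := by
  have h0 : (0 : ℝ) ≤ 2 + |(k : ℝ)| := by positivity
  have h1 := Real.log_le_self (Real.sqrt_nonneg (2 + |(k : ℝ)|))
  rw [Real.log_sqrt h0] at h1
  calc |y k - k| ≤ C * Real.log (2 + |(k : ℝ)|) := hb k
    _ ≤ C * (2 * √(2 + |(k : ℝ)|)) := by gcongr; linarith
    _ = _ := by ring

/-- The deviation `D √(2 + |k|)` is absorbed by `|k| / 2` up to the constant `1 + D² / 2`,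
by the inequality `D s ≤ (s² + D²) / 2`. -/
lemma half_abs_sub_le {D : ℝ} {y : ℤ → ℝ}
    (hb : ∀ k : ℤ, |y k - k| ≤ D * √(2 + |(k : ℝ)|)) (k : ℤ) :
    |(k : ℝ)| / 2 - (1 + D ^ 2 / 2) ≤ |y k| := by
  have h0 : (0 : ℝ) ≤ 2 + |(k : ℝ)| := by positivity
  have h1 := Real.sq_sqrt h0
  have h2 := abs_sub_abs_le_abs_sub (k : ℝ) (y k)
  rw [abs_sub_comm] at h2
  nlinarith [hb k, sq_nonneg (√(2 + |(k : ℝ)|) - D)]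

lemma finite_abs_lt {D : ℝ} {y : ℤ → ℝ}
    (hb : ∀ k : ℤ, |y k - k| ≤ D * √(2 + |(k : ℝ)|)) (A : ℝ) :
    {k : ℤ | |y k| < A}.Finite := by
  refine (Set.finite_Icc (-⌈2 * A + 2 + D ^ 2⌉) ⌈2 * A + 2 + D ^ 2⌉).subset fun k hk => ?_
  have h1 := half_abs_sub_le hb k
  have h2 : |y k| < A := hk
  have h3 : |(k : ℝ)| ≤ ⌈2 * A + 2 + D ^ 2⌉ := (by linarith : _ ≤ _).trans (Int.le_ceil _)
  rw [Set.mem_Icc, ← abs_le]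
  exact_mod_cast h3

/-- Once `|k|` is large compared with `‖w‖`, the point `y k` is at distance at least `|k| / 4`
from `w`. -/
lemma quarter_le_norm_sub {D : ℝ} {y : ℤ → ℝ}
    (hb : ∀ k : ℤ, |y k - k| ≤ D * √(2 + |(k : ℝ)|)) (w : ℂ) (k : ℤ)
    (hk : 4 * (1 + D ^ 2 / 2 + ‖w‖) ≤ |(k : ℝ)|) :
    |(k : ℝ)| / 4 ≤ ‖w - (y k : ℂ)‖ := by
  have h1 := half_abs_sub_le hb k
  have h2 := norm_sub_norm_le (y k : ℂ) w
  rw [norm_sub_rev, Complex.norm_real, Real.norm_eq_abs] at h2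
  linarith

/-! ### Summability of symmetric pairs -/

lemma summable_inv_mul_sqrt :
    Summable fun n : ℕ => (((n : ℝ) + 1) * √((n : ℝ) + 1))⁻¹ := by
  have h := (summable_nat_add_iff 1).2
    (Real.summable_nat_rpow_inv.2 (by norm_num : (1 : ℝ) < 3 / 2))
  refine h.congr fun n => ?_
  have : (0 : ℝ) < (n : ℝ) + 1 := by positivity
  rw [Real.sqrt_eq_rpow, Nat.cast_add, Nat.cast_one, show (3 / 2 : ℝ) = 1 + 1 / 2 by norm_num,
    Real.rpow_add this, Real.rpow_one]

/-- Opposite points nearly cancel: over the common denominator, the numerator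
`2w - y_k - y_{-k}` is `O(√k)` while the denominator is of order `k²`. -/
lemma summable_norm_pair {D : ℝ} (hD : 0 ≤ D) {y : ℤ → ℝ}
    (hb : ∀ k : ℤ, |y k - k| ≤ D * √(2 + |(k : ℝ)|)) (w : ℂ) (hw : ∀ k : ℤ, w ≠ (y k : ℂ)) :
    Summable fun n : ℕ =>
      ‖1 / (w - (y ((n : ℤ) + 1) : ℂ)) + 1 / (w - (y (-((n : ℤ) + 1)) : ℂ))‖ := by
  refine Summable.of_norm_bounded_eventually_nat
    (summable_inv_mul_sqrt.mul_left (16 * (2 * ‖w‖ + 4 * D))) ?_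
  filter_upwards [eventually_ge_atTop ⌈4 * (1 + D ^ 2 / 2 + ‖w‖)⌉₊] with n hn
  have hn' : 4 * (1 + D ^ 2 / 2 + ‖w‖) ≤ n := Nat.ceil_le.1 hn
  set t : ℝ := (n : ℝ) + 1 with ht
  have ht1 : 1 ≤ t := by rw [ht]; linarith [n.cast_nonneg (α := ℝ)]
  have e1 : |(((n : ℤ) + 1 : ℤ) : ℝ)| = t := by
    push_cast; exact abs_of_pos (by linarith)
  have e2 : |((-((n : ℤ) + 1) : ℤ) : ℝ)| = t := by
    rw [Int.cast_neg, abs_neg, e1]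
  have d1 := quarter_le_norm_sub hb w ((n : ℤ) + 1) (by rw [e1]; linarith)
  have d2 := quarter_le_norm_sub hb w (-((n : ℤ) + 1)) (by rw [e2]; linarith)
  have b1 := hb ((n : ℤ) + 1)
  have b2 := hb (-((n : ℤ) + 1))
  rw [e1] at d1 b1
  rw [e2] at d2 b2
  set a : ℝ := y ((n : ℤ) + 1)
  set b : ℝ := y (-((n : ℤ) + 1))
  have hs : √(2 + t) ≤ 2 * √t := by
    rw [Real.sqrt_le_left (by positivity), mul_pow, Real.sq_sqrt (by linarith)]
    linarith
  have hs1 : 1 ≤ √t := Real.one_le_sqrt.2 ht1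
  have hsq : √t * √t = t := Real.mul_self_sqrt (by linarith)
  have hab : |a + b| ≤ 4 * D * √t := by
    have h3 : |a + b| ≤ D * √(2 + t) + D * √(2 + t) := by
      refine le_trans (le_of_eq ?_) ((abs_add_le _ _).trans (add_le_add b1 b2))
      push_cast
      ring_nf
    nlinarith
  have hnum : ‖2 * w - ((a + b : ℝ) : ℂ)‖ ≤ (2 * ‖w‖ + 4 * D) * √t := by
    refine (norm_sub_le _ _).trans ?_
    rw [norm_mul, Complex.norm_real, Real.norm_eq_abs, Complex.norm_ofNat]
    nlinarith [norm_nonneg w]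
  have hne1 : w - (a : ℂ) ≠ 0 := sub_ne_zero.2 (hw _)
  have hne2 : w - (b : ℂ) ≠ 0 := sub_ne_zero.2 (hw _)
  have key : 1 / (w - (a : ℂ)) + 1 / (w - (b : ℂ))
      = (2 * w - ((a + b : ℝ) : ℂ)) / ((w - a) * (w - b)) := by
    field_simp
    push_cast
    ring
  rw [norm_norm, key, norm_div, norm_mul]
  calc _ ≤ ((2 * ‖w‖ + 4 * D) * √t) / (t / 4 * (t / 4)) := by gcongr
    _ = _ := by
      have : √t ≠ 0 := by positivity
      have : t ≠ 0 := by positivity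
      field_simp
      rw [Real.sq_sqrt (by linarith)]
      ring

lemma summable_inv_mul {D : ℝ} {y : ℤ → ℝ}
    (hb : ∀ k : ℤ, |y k - k| ≤ D * √(2 + |(k : ℝ)|)) :
    Summable fun n : ℕ => (|y ((n : ℤ) + 1)| * |y (-((n : ℤ) + 1))|)⁻¹ := by
  refine Summable.of_norm_bounded_eventually_nat (summable_inv_mul_sqrt.mul_left 16) ?_
  filter_upwards [eventually_ge_atTop ⌈4 * (1 + D ^ 2 / 2 + ‖(0 : ℂ)‖)⌉₊] with n hn
  have hn' : 4 * (1 + D ^ 2 / 2 + ‖(0 : ℂ)‖) ≤ n := Nat.ceil_le.1 hn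
  set t : ℝ := (n : ℝ) + 1 with ht
  have ht1 : 1 ≤ t := by rw [ht]; linarith [n.cast_nonneg (α := ℝ)]
  have e1 : |(((n : ℤ) + 1 : ℤ) : ℝ)| = t := by
    push_cast; exact abs_of_pos (by linarith)
  have e2 : |((-((n : ℤ) + 1) : ℤ) : ℝ)| = t := by
    rw [Int.cast_neg, abs_neg, e1]
  have d1 := quarter_le_norm_sub hb 0 ((n : ℤ) + 1) (by rw [e1]; linarith)
  have d2 := quarter_le_norm_sub hb 0 (-((n : ℤ) + 1)) (by rw [e2]; linarith)
  rw [e1, zero_sub, norm_neg, Complex.norm_real, Real.norm_eq_abs] at d1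
  rw [e2, zero_sub, norm_neg, Complex.norm_real, Real.norm_eq_abs] at d2
  have hst : √t ≤ t := Real.sqrt_le_left (by linarith) |>.2 (by nlinarith)
  have hs0 : 0 < √t := by positivity
  rw [norm_inv, norm_mul, Real.norm_eq_abs, Real.norm_eq_abs, abs_abs, abs_abs]
  calc _ ≤ (t / 4 * (t / 4))⁻¹ := by gcongr
    _ = 16 * (t * t)⁻¹ := by field_simp; norm_num
    _ ≤ _ := by gcongr

/-! ### Cutting at `|y k| < A` versus cutting at `|k| ≤ N` -/

lemma sum_Icc_neg (a : ℤ → ℂ) (N : ℕ) :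
    ∑ k ∈ Finset.Icc (-(N : ℤ)) N, a k =
      a 0 + ∑ n ∈ Finset.range N, (a ((n : ℤ) + 1) + a (-((n : ℤ) + 1))) := by
  induction N with
  | zero => simp
  | succ N ih =>
    have : Finset.Icc (-((N + 1 : ℕ) : ℤ)) ((N + 1 : ℕ) : ℤ) =
        insert ((N : ℤ) + 1) (insert (-((N : ℤ) + 1)) (Finset.Icc (-(N : ℤ)) N)) := by
      ext k; simp only [Finset.mem_Icc, Finset.mem_insert]; omega
    rw [this, Finset.sum_insert, Finset.sum_insert, ih, Finset.sum_range_succ]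
    · ring
    · simp
    · simp only [Finset.mem_insert, Finset.mem_Icc]; omega

/-- At most `2R + 1` integers lie within distance `R` of `A`, and as many within `R` of `-A`. -/
lemma card_le_of_abs_sub_le {A R : ℝ} (hR : 0 ≤ R) (s : Finset ℤ)
    (hs : ∀ k ∈ s, |(|(k : ℝ)| - A)| ≤ R) : (s.card : ℝ) ≤ 2 * (2 * R + 1) := by
  set I := Finset.Icc ⌈A - R⌉ ⌊A + R⌋
  have hI : (I.card : ℝ) ≤ 2 * R + 1 := by
    rw [Int.card_Icc]
    have h1 := Int.floor_le (A + R)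
    have h2 := Int.le_ceil (A - R)
    have : (((⌊A + R⌋ + 1 - ⌈A - R⌉).toNat : ℤ) : ℝ) ≤ 2 * R + 1 := by
      rw [Int.toNat_eq_max]
      push_cast
      exact max_le (by linarith) (by linarith)
    exact_mod_cast this
  have hsub : s ⊆ I ∪ I.image (fun k => -k) := by
    intro k hk
    have h := abs_le.1 (hs k hk)
    rw [Finset.mem_union, Finset.mem_image]
    rcases le_total 0 k with h0 | h0
    · left
      rw [abs_of_nonneg (by exact_mod_cast h0)] at h
      exact Finset.mem_Icc.2 ⟨Int.ceil_le.2 (by linarith), Int.le_floor.2 (by linarith)⟩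
    · right
      rw [abs_of_nonpos (by exact_mod_cast h0)] at h
      refine ⟨-k, Finset.mem_Icc.2 ⟨Int.ceil_le.2 ?_, Int.le_floor.2 ?_⟩, neg_neg k⟩ <;>
        push_cast <;> linarith
  have h1 := (Finset.card_le_card hsub).trans
    ((Finset.card_union_le _ _).trans (Nat.add_le_add_left Finset.card_image_le _))
  have h2 : (s.card : ℝ) ≤ I.card + I.card := by exact_mod_cast h1
  linarith

/-- An index counted by exactly one of the two cuts `|y k| < A` and `|k| ≤ ⌊A⌋` satisfies
`|k| = A + O(√A)`. -/
lemma abs_sub_le_of_mem_symmDiff {D : ℝ} (hD : 0 ≤ D) {y : ℤ → ℝ}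
    (hb : ∀ k : ℤ, |y k - k| ≤ D * √(2 + |(k : ℝ)|)) {A : ℝ} (hA : 0 ≤ A) (k : ℤ)
    (h : |y k| < A ∧ A < |(k : ℝ)| ∨ A ≤ |y k| ∧ |(k : ℝ)| ≤ A) :
    |(|(k : ℝ)| - A)| ≤ D * √(2 * A + 4 + D ^ 2) := by
  have h1 := half_abs_sub_le hb k
  have h2 := abs_sub_abs_le_abs_sub (k : ℝ) (y k)
  rw [abs_sub_comm] at h2
  have h3 := abs_sub_abs_le_abs_sub (y k) (k : ℝ)
  have h4 : D * √(2 + |(k : ℝ)|) ≤ D * √(2 * A + 4 + D ^ 2) := by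
    refine mul_le_mul_of_nonneg_left (Real.sqrt_le_sqrt ?_) hD
    rcases h with h | h <;> nlinarith [h.1, h.2]
  have h5 := hb k
  rw [abs_le]
  rcases h with h | h <;> constructor <;> linarith [h.1, h.2]

lemma tendsto_error_bound (D : ℝ) :
    Tendsto (fun A : ℝ => 2 * (2 * (D * √(2 * A + 4 + D ^ 2)) + 1) * (8 / A)) atTop (𝓝 0) := by
  have h1 : Tendsto (fun A : ℝ => (2 * A + 4 + D ^ 2) / A ^ 2) atTop (𝓝 0) := by
    have hi := tendsto_inv_atTop_zero (𝕜 := ℝ)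
    have : Tendsto (fun A : ℝ => 2 * A⁻¹ + (4 + D ^ 2) * (A⁻¹ * A⁻¹)) atTop (𝓝 0) := by
      simpa using (hi.const_mul 2).add ((hi.mul hi).const_mul (4 + D ^ 2))
    refine this.congr' ?_
    filter_upwards [eventually_gt_atTop 0] with A hA
    field_simp
    ring
  have h2 : Tendsto (fun A : ℝ => √(2 * A + 4 + D ^ 2) / A) atTop (𝓝 0) := by
    have := h1.sqrt
    rw [Real.sqrt_zero] at this
    refine this.congr' ?_
    filter_upwards [eventually_gt_atTop 0] with A hA
    rw [Real.sqrt_div' _ (by positivity), Real.sqrt_sq hA.le]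
  have h3 : Tendsto (fun A : ℝ => 32 * D * (√(2 * A + 4 + D ^ 2) / A) + 16 * A⁻¹) atTop (𝓝 0) := by
    simpa using (h2.const_mul (32 * D)).add ((tendsto_inv_atTop_zero (𝕜 := ℝ)).const_mul 16)
  refine h3.congr' ?_
  filter_upwards [eventually_gt_atTop 0] with A hA
  field_simp
  ring

/-- The two cuts give sums differing by `O(√A)` terms of size `O(1 / A)`. -/
lemma tendsto_sum_sub_sum {D : ℝ} (hD : 0 ≤ D) {y : ℤ → ℝ}
    (hb : ∀ k : ℤ, |y k - k| ≤ D * √(2 + |(k : ℝ)|)) (z : ℂ) :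
    Tendsto (fun A : ℝ => ∑ᶠ k ∈ {k : ℤ | |y k| < A}, 1 / (z - (y k : ℂ)) -
      ∑ k ∈ Finset.Icc (-(⌊A⌋₊ : ℤ)) ⌊A⌋₊, 1 / (z - (y k : ℂ))) atTop (𝓝 0) := by
  refine squeeze_zero_norm' ?_ (tendsto_error_bound D)
  have hsmall : ∀ᶠ A : ℝ in atTop, D * √(2 * A + 4 + D ^ 2) ≤ A / 2 := by
    have := (tendsto_error_bound D).eventually_lt_const (by norm_num : (0 : ℝ) < 16)
    filter_upwards [this, eventually_gt_atTop 0] with A h hA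
    rw [← mul_div_assoc, div_lt_iff₀ hA] at h
    linarith
  filter_upwards [hsmall, eventually_gt_atTop 0,
    eventually_ge_atTop (8 * (1 + D ^ 2 / 2 + ‖z‖))] with A hR hA hAz
  set R := D * √(2 * A + 4 + D ^ 2) with hRdef
  have hR0 : 0 ≤ R := by positivity
  have hfin := finsum_mem_eq_finite_toFinset_sum (fun k => 1 / (z - (y k : ℂ)))
    (finite_abs_lt hb A)
  simp only [Set.mem_ofPred_eq] at hfin ⊢
  rw [hfin]
  set S := (finite_abs_lt hb A).toFinset with hS
  set T := Finset.Icc (-(⌊A⌋₊ : ℤ)) ⌊A⌋₊ with hT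
  have memT : ∀ k : ℤ, k ∈ T ↔ |(k : ℝ)| ≤ A := by
    intro k
    rw [hT, Finset.mem_Icc, ← abs_le, ← Int.natCast_natAbs, Int.ofNat_le, Nat.le_floor_iff hA.le,
      Nat.cast_natAbs, Int.cast_abs]
  have memS : ∀ k : ℤ, k ∈ S ↔ |y k| < A := by
    intro k; simp [hS]
  have hmem : ∀ k ∈ (S \ T) ∪ (T \ S), |(|(k : ℝ)| - A)| ≤ R := by
    intro k hk
    refine abs_sub_le_of_mem_symmDiff hD hb hA.le k ?_
    simpa [memS, memT, and_comm] using hk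
  have hterm : ∀ k ∈ (S \ T) ∪ (T \ S), ‖1 / (z - (y k : ℂ))‖ ≤ 8 / A := by
    intro k hk
    have h1 := abs_le.1 (hmem k hk)
    have h2 := quarter_le_norm_sub hb z k (by linarith)
    rw [norm_div, norm_one, div_le_div_iff₀ (by linarith) hA]
    linarith
  have hdisj : Disjoint (S \ T) (T \ S) := disjoint_sdiff_sdiff
  rw [← Finset.sum_sdiff_sub_sum_sdiff]
  calc _ ≤ ‖∑ k ∈ S \ T, 1 / (z - (y k : ℂ))‖ + ‖∑ k ∈ T \ S, 1 / (z - (y k : ℂ))‖ :=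
        norm_sub_le _ _
    _ ≤ ∑ k ∈ S \ T, ‖1 / (z - (y k : ℂ))‖ + ∑ k ∈ T \ S, ‖1 / (z - (y k : ℂ))‖ :=
        add_le_add (norm_sum_le _ _) (norm_sum_le _ _)
    _ = ∑ k ∈ (S \ T) ∪ (T \ S), ‖1 / (z - (y k : ℂ))‖ := (Finset.sum_union hdisj).symm
    _ ≤ ((S \ T) ∪ (T \ S)).card * (8 / A) := by
        rw [← nsmul_eq_mul]; exact Finset.sum_le_card_nsmul _ _ _ hterm
    _ ≤ 2 * (2 * R + 1) * (8 / A) := by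
        gcongr; exact card_le_of_abs_sub_le hR0 _ hmem

/-- Cutting at `|y k| < A` gives the sum of the series over symmetric pairs. -/
lemma tendsto_finsum {D : ℝ} (hD : 0 ≤ D) {y : ℤ → ℝ}
    (hb : ∀ k : ℤ, |y k - k| ≤ D * √(2 + |(k : ℝ)|)) (z : ℂ) (hz : ∀ k : ℤ, z ≠ (y k : ℂ)) :
    Tendsto (fun A : ℝ => ∑ᶠ k ∈ {k : ℤ | |y k| < A}, 1 / (z - (y k : ℂ))) atTop
      (𝓝 (1 / (z - (y 0 : ℂ)) +
        ∑' n : ℕ, (1 / (z - (y ((n : ℤ) + 1) : ℂ)) + 1 / (z - (y (-((n : ℤ) + 1)) : ℂ))))) := by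
  have h1 := ((summable_norm_pair hD hb z hz).of_norm.hasSum.tendsto_sum_nat.comp
    (tendsto_nat_floor_atTop (α := ℝ))).const_add (1 / (z - (y 0 : ℂ)))
  have h2 := (tendsto_sum_sub_sum hD hb z).add h1
  rw [zero_add] at h2
  refine h2.congr fun A => ?_
  rw [sum_Icc_neg (fun k => 1 / (z - (y k : ℂ)))]
  simp

/-! ### The logarithmic derivative of the product -/

/-- The `n`-th paired factor of the product, minus one. -/
noncomputable def pairTerm (y : ℤ → ℝ) (n : ℕ) (w : ℂ) : ℂ :=
  (1 - w / (y ((n : ℤ) + 1) : ℂ)) * (1 - w / (y (-((n : ℤ) + 1)) : ℂ)) - 1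

lemma one_add_pairTerm (y : ℤ → ℝ) (n : ℕ) (w : ℂ) :
    1 + pairTerm y n w =
      (1 - w / (y ((n : ℤ) + 1) : ℂ)) * (1 - w / (y (-((n : ℤ) + 1)) : ℂ)) := by
  rw [pairTerm]; ring

/-- Majorant of `pairTerm y n` on the disc of radius `r`: the linear coefficient is the pair
`1 / (0 - y_k) + 1 / (0 - y_{-k})`, the quadratic one is `1 / (y_k y_{-k})`. -/
noncomputable def pairBound (y : ℤ → ℝ) (r : ℝ) (n : ℕ) : ℝ :=
  r * ‖1 / ((0 : ℂ) - (y ((n : ℤ) + 1) : ℂ)) + 1 / ((0 : ℂ) - (y (-((n : ℤ) + 1)) : ℂ))‖ +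
    r ^ 2 * (|y ((n : ℤ) + 1)| * |y (-((n : ℤ) + 1))|)⁻¹

lemma norm_pairTerm_le {y : ℤ → ℝ} (hy : ∀ k : ℤ, y k ≠ 0) {r : ℝ} (n : ℕ) {w : ℂ}
    (hw : ‖w‖ ≤ r) : ‖pairTerm y n w‖ ≤ pairBound y r n := by
  have h1 : (y ((n : ℤ) + 1) : ℂ) ≠ 0 := by exact_mod_cast hy _
  have h2 : (y (-((n : ℤ) + 1)) : ℂ) ≠ 0 := by exact_mod_cast hy _
  have hr : 0 ≤ r := (norm_nonneg w).trans hw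
  have key : pairTerm y n w =
      w * (1 / ((0 : ℂ) - (y ((n : ℤ) + 1) : ℂ)) + 1 / ((0 : ℂ) - (y (-((n : ℤ) + 1)) : ℂ))) +
        w ^ 2 * ((y ((n : ℤ) + 1) : ℂ) * (y (-((n : ℤ) + 1)) : ℂ))⁻¹ := by
    rw [pairTerm, zero_sub, zero_sub]
    field_simp
    ring
  rw [key, pairBound]
  refine (norm_add_le _ _).trans ?_
  rw [norm_mul, norm_mul, norm_pow, norm_inv, norm_mul, Complex.norm_real, Complex.norm_real,
    Real.norm_eq_abs, Real.norm_eq_abs]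
  gcongr

lemma logDeriv_one_sub_div {a : ℂ} (ha : a ≠ 0) {z : ℂ} (hz : z ≠ a) :
    logDeriv (fun w : ℂ => 1 - w / a) z = 1 / (z - a) := by
  have h : HasDerivAt (fun w : ℂ => 1 - w / a) (-(1 / a)) z :=
    ((hasDerivAt_id z).div_const a).const_sub 1
  have h1 : a - z ≠ 0 := sub_ne_zero.2 hz.symm
  have h2 : z - a ≠ 0 := sub_ne_zero.2 hz
  rw [logDeriv_apply, h.deriv, one_sub_div ha]
  field_simp
  ring

lemma one_sub_div_ne_zero {a : ℂ} (ha : a ≠ 0) {z : ℂ} (hz : z ≠ a) : 1 - z / a ≠ 0 := by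
  rw [one_sub_div ha]
  exact div_ne_zero (sub_ne_zero.2 hz.symm) ha

lemma logDeriv_xiFun {D : ℝ} (hD : 0 ≤ D) {y : ℤ → ℝ} (hy : ∀ k : ℤ, y k ≠ 0)
    (hb : ∀ k : ℤ, |y k - k| ≤ D * √(2 + |(k : ℝ)|)) (z : ℂ) (hz : ∀ k : ℤ, z ≠ (y k : ℂ)) :
    logDeriv (xiFun y) z = Real.pi * Complex.I + (1 / (z - (y 0 : ℂ)) +
      ∑' n : ℕ, (1 / (z - (y ((n : ℤ) + 1) : ℂ)) + 1 / (z - (y (-((n : ℤ) + 1)) : ℂ)))) := by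
  have hyC : ∀ k : ℤ, (y k : ℂ) ≠ 0 := fun k => by exact_mod_cast hy k
  set r : ℝ := ‖z‖ + 1
  set s : Set ℂ := Metric.ball 0 r
  have hs : IsOpen s := Metric.isOpen_ball
  have hzs : z ∈ s := by simp [s, r]
  have hsum : Summable (pairBound y r) :=
    ((summable_norm_pair hD hb 0 fun k => (hyC k).symm).mul_left r).add
      ((summable_inv_mul hb).mul_left (r ^ 2))
  have hdiff : ∀ n, Differentiable ℂ fun w => 1 + pairTerm y n w := fun n => by
    unfold pairTerm; fun_prop
  have hprod : HasProdLocallyUniformlyOn (fun n w => 1 + pairTerm y n w)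
      (fun w => ∏' n, (1 + pairTerm y n w)) s := by
    refine hsum.hasProdLocallyUniformlyOn_nat_one_add hs ?_ fun n => ?_
    · exact .of_forall fun n w hw => norm_pairTerm_le hy n (mem_ball_zero_iff.1 hw).le
    · unfold pairTerm; fun_prop
  have hne : ∀ n, 1 + pairTerm y n z ≠ 0 := fun n => by
    rw [one_add_pairTerm]
    exact mul_ne_zero (one_sub_div_ne_zero (hyC _) (hz _)) (one_sub_div_ne_zero (hyC _) (hz _))
  have hnez : ∏' n, (1 + pairTerm y n z) ≠ 0 :=
    tprod_one_add_ne_zero_of_summable hne (hsum.of_nonneg_of_le (fun n => norm_nonneg _)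
      fun n => norm_pairTerm_le hy n (mem_ball_zero_iff.1 hzs).le)
  have hlog : ∀ n : ℕ, logDeriv (fun w => 1 + pairTerm y n w) z =
      1 / (z - (y ((n : ℤ) + 1) : ℂ)) + 1 / (z - (y (-((n : ℤ) + 1)) : ℂ)) := fun n => by
    simp only [one_add_pairTerm]
    rw [logDeriv_mul z (one_sub_div_ne_zero (hyC _) (hz _)) (one_sub_div_ne_zero (hyC _) (hz _))
      (by fun_prop) (by fun_prop), logDeriv_one_sub_div (hyC _) (hz _),
      logDeriv_one_sub_div (hyC _) (hz _)]
  have htprod := logDeriv_tprod_eq_tsum hs hzs hne (fun n => (hdiff n).differentiableOn)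
    (by simpa only [hlog] using (summable_norm_pair hD hb z hz).of_norm)
    hprod.multipliableLocallyUniformlyOn hnez
  simp only [hlog] at htprod
  have hdprod : DifferentiableAt ℂ (fun w => ∏' n, (1 + pairTerm y n w)) z :=
    (TendstoLocallyUniformlyOn.differentiableOn hprod
      (.of_forall fun t => DifferentiableOn.fun_finsetProd fun n _ => (hdiff n).differentiableOn)
      hs).differentiableAt (hs.mem_nhds hzs)
  have hexp : logDeriv (fun w : ℂ => Complex.exp (Real.pi * Complex.I * w)) z =
      Real.pi * Complex.I := by
    have h : HasDerivAt (fun w : ℂ => Complex.exp (Real.pi * Complex.I * w))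
        (Complex.exp (Real.pi * Complex.I * z) * (Real.pi * Complex.I * 1)) z :=
      ((hasDerivAt_id z).const_mul _).cexp
    rw [logDeriv_apply, h.deriv, mul_one, mul_div_cancel_left₀ _ (Complex.exp_ne_zero _)]
  have hxi : xiFun y = fun w => (Complex.exp (Real.pi * Complex.I * w) * (1 - w / (y 0 : ℂ))) *
      ∏' n, (1 + pairTerm y n w) := by
    funext w
    simp only [xiFun, one_add_pairTerm]
  have h0 := one_sub_div_ne_zero (hyC 0) (hz 0)
  have he : Complex.exp (Real.pi * Complex.I * z) ≠ 0 := Complex.exp_ne_zero _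
  have hsplit := logDeriv_mul (f := fun w : ℂ => Complex.exp (Real.pi * Complex.I * w))
    (g := fun w : ℂ => 1 - w / (y 0 : ℂ)) z he h0 (by fun_prop) (by fun_prop)
  rw [hxi, logDeriv_mul (f := fun w : ℂ =>
      Complex.exp (Real.pi * Complex.I * w) * (1 - w / (y 0 : ℂ)))
    z (mul_ne_zero he h0) hnez (by fun_prop) hdprod, hsplit, hexp,
    logDeriv_one_sub_div (hyC 0) (hz 0), htprod, add_assoc]

/-! ### Conclusion -/

/-- If `y : ℤ → ℝ` is nonvanishing with `|y_k − k| ≤ C log(2+|k|)`, then for every `z` outside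
`{y_k : k ∈ ℤ}`: the set `{k : |y_k| < A}` is finite for every `A > 0`, and
`ξ′(z)/ξ(z) = iπ + lim_{A→∞} Σ_{k : |y_k| < A} 1/(z − y_k)`. -/
theorem stmt_7 (C : ℝ) (hC : 0 < C) (y : ℤ → ℝ) (hy : ∀ k : ℤ, y k ≠ 0)
    (hb : ∀ k : ℤ, |y k - k| ≤ C * Real.log (2 + |(k : ℝ)|))
    (z : ℂ) (hz : ∀ k : ℤ, z ≠ (y k : ℂ)) :
    (∀ A : ℝ, 0 < A → {k : ℤ | |y k| < A}.Finite) ∧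
    ∃ L : ℂ,
      Tendsto (fun A : ℝ => ∑ᶠ k ∈ {k : ℤ | |y k| < A}, 1 / (z - (y k : ℂ))) atTop (𝓝 L) ∧
      deriv (xiFun y) z / xiFun y z = Real.pi * Complex.I + L := by
  have hb' := abs_sub_le_sqrt hC hb
  have hD : 0 ≤ 2 * C := by positivity
  refine ⟨fun A _ => finite_abs_lt hb' A, _, tendsto_finsum hD hb' z hz, ?_⟩
  rw [← logDeriv_apply]
  exact logDeriv_xiFun hD hy hb' z hz
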